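/- Let n ≥ 1 and let A ⊆ {1, ..., n} be a 3-AP-free set. Then the set B = {a₁ + 10n·a₂ : a₁, a₂ ∈ A} is a 3-AP-free subset of {1, ..., 100n²} of cardinality |A|². Consequently, r₃(100n²) ≥ r₃(n)². -/

import Mathlib

/-- `r3 m` is the maximum cardinality of a 3-AP-free subset of `{1, ..., m}`. -/
noncomputable def r3 (m : ℕ) : ℕ :=
  sSup {k : ℕ | ∃ A : Finset ℤ, A ⊆ Finset.Icc 1 (m : ℤ) ∧ ThreeAPFree (A : Set ℤ) ∧ A.card = k}

/-!
Reading a pair `(x, y)` as the two-digit number `x + q * y` is additive, and it loses no information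
about sums of `k` pairs as long as the sums of the first digits lie in an interval of length less
than `q`. Hence it is a Freiman isomorphism of order `k`. For `k = 2` such maps preserve
3-AP-freeness and the additive Roth number, which is supermultiplicative on products.
-/

theorem image_fst_add_mul_snd_subset_Icc {R : Type*} [Semiring R] [PartialOrder R]
    [IsOrderedRing R] [LocallyFiniteOrder R] [DecidableEq R] {q a b c d : R} {A B : Finset R}
    (hA : A ⊆ Finset.Icc a b) (hB : B ⊆ Finset.Icc c d) (hq : 0 ≤ q) :
    (A ×ˢ B).image (fun p ↦ p.1 + q * p.2) ⊆ Finset.Icc (a + q * c) (b + q * d) := by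
  refine Finset.image_subset_iff.2 fun p hp ↦ ?_
  obtain ⟨hpA, hpB⟩ := Finset.mem_product.1 hp
  obtain ⟨hap, hpb⟩ := Finset.mem_Icc.1 (hA hpA)
  obtain ⟨hcp, hpd⟩ := Finset.mem_Icc.1 (hB hpB)
  exact Finset.mem_Icc.2 ⟨by gcongr, by gcongr⟩

theorem multiset_sum_mem_Icc {M : Type*} [AddCommMonoid M] [PartialOrder M] [IsOrderedAddMonoid M]
    {a b : M} {u : Multiset M} (hu : ∀ x ∈ u, x ∈ Set.Icc a b) :
    u.sum ∈ Set.Icc (u.card • a) (u.card • b) :=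
  ⟨Multiset.card_nsmul_le_sum fun x hx ↦ (hu x hx).1,
    Multiset.sum_le_card_nsmul _ _ fun x hx ↦ (hu x hx).2⟩

theorem multiset_sum_map_fst_add_mul_snd {R : Type*} [NonUnitalNonAssocSemiring R] (q : R)
    (u : Multiset (R × R)) :
    (u.map fun p ↦ p.1 + q * p.2).sum = u.sum.1 + q * u.sum.2 := by
  rw [Multiset.sum_map_add, Multiset.sum_map_mul_left, Multiset.fst_sum, Multiset.snd_sum]

section TwoDigit

variable {q a b : ℤ}

theorem add_mul_eq_add_mul_iff_of_mem_Icc {x x' y y' : ℤ} (hx : x ∈ Set.Icc a b)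
    (hx' : x' ∈ Set.Icc a b) (hq : b - a < q) :
    x + q * y = x' + q * y' ↔ x = x' ∧ y = y' := by
  refine ⟨fun heq ↦ ?_, fun ⟨hxx', hyy'⟩ ↦ hxx' ▸ hyy' ▸ rfl⟩
  have hlt : |x - x'| < q := (abs_sub_le_of_le_of_le hx.1 hx.2 hx'.1 hx'.2).trans_lt hq
  have hdvd : q ∣ x - x' := ⟨y' - y, by linarith⟩
  have hxx' : x = x' := sub_eq_zero.1 (Int.eq_zero_of_abs_lt_dvd hdvd hlt)
  have hq₀ : q ≠ 0 := ((abs_nonneg _).trans_lt hlt).ne'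
  exact ⟨hxx', mul_left_cancel₀ hq₀ (by simpa only [hxx', add_right_inj] using heq)⟩

theorem isAddFreimanIso_fst_add_mul_snd {s t : Set ℤ} {k : ℕ} (hs : s ⊆ Set.Icc a b)
    (hk : k ≠ 0) (hq : k • (b - a) < q) :
    IsAddFreimanIso k (s ×ˢ t) ((fun p : ℤ × ℤ ↦ p.1 + q * p.2) '' (s ×ˢ t))
      (fun p ↦ p.1 + q * p.2) where
  bijOn := by
    refine Set.InjOn.bijOn_image fun p hp p' hp' heq ↦ ?_
    have hab : a ≤ b := (hs hp.1).1.trans (hs hp.1).2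
    have hlt : b - a < q := (le_self_nsmul (sub_nonneg.2 hab) hk).trans_lt hq
    exact Prod.ext_iff.2 ((add_mul_eq_add_mul_iff_of_mem_Icc (hs hp.1) (hs hp'.1) hlt).1 heq)
  map_sum_eq_map_sum u v hu hv huk hvk := by
    have sum_fst_mem {w : Multiset (ℤ × ℤ)} (hw : ∀ ⦃p⦄, p ∈ w → p ∈ s ×ˢ t) (hwk : w.card = k) :
        w.sum.1 ∈ Set.Icc (k • a) (k • b) := by
      rw [Multiset.fst_sum, ← hwk, ← Multiset.card_map Prod.fst w]
      exact multiset_sum_mem_Icc (Multiset.forall_mem_map_iff.2 fun p hp ↦ hs (hw hp).1)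
    rw [nsmul_sub] at hq
    rw [multiset_sum_map_fst_add_mul_snd, multiset_sum_map_fst_add_mul_snd,
      add_mul_eq_add_mul_iff_of_mem_Icc (sum_fst_mem hu huk) (sum_fst_mem hv hvk) hq,
      Prod.ext_iff]

variable {A B : Finset ℤ}

theorem isAddFreimanIso_finset_image_fst_add_mul_snd {k : ℕ} (hA : A ⊆ Finset.Icc a b)
    (hk : k ≠ 0) (hq : k • (b - a) < q) :
    IsAddFreimanIso k (↑(A ×ˢ B) : Set (ℤ × ℤ))
      ↑((A ×ˢ B).image fun p ↦ p.1 + q * p.2) (fun p ↦ p.1 + q * p.2) := by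
  rw [Finset.coe_image, Finset.coe_product]
  exact isAddFreimanIso_fst_add_mul_snd (Finset.coe_Icc a b ▸ Finset.coe_subset.2 hA) hk hq

theorem card_image_fst_add_mul_snd (hA : A ⊆ Finset.Icc a b) (hq : b - a < q) :
    ((A ×ˢ B).image fun p ↦ p.1 + q * p.2).card = A.card * B.card := by
  have hiso := isAddFreimanIso_finset_image_fst_add_mul_snd (B := B) hA one_ne_zero
    (by rwa [one_nsmul])
  rw [Finset.card_image_of_injOn hiso.bijOn.injOn, Finset.card_product]

theorem threeAPFree_image_fst_add_mul_snd (hA : A ⊆ Finset.Icc a b) (hq : 2 * (b - a) < q)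
    (hAfree : ThreeAPFree (A : Set ℤ)) (hBfree : ThreeAPFree (B : Set ℤ)) :
    ThreeAPFree (↑((A ×ˢ B).image fun p ↦ p.1 + q * p.2) : Set ℤ) := by
  have hiso := isAddFreimanIso_finset_image_fst_add_mul_snd (B := B) hA two_ne_zero hq
  rw [← hiso.threeAPFree_congr, Finset.coe_product]
  exact hAfree.prod hBfree

theorem addRothNumber_mul_le_image_fst_add_mul_snd (hA : A ⊆ Finset.Icc a b)
    (hq : 2 * (b - a) < q) :
    addRothNumber A * addRothNumber B ≤
      addRothNumber ((A ×ˢ B).image fun p ↦ p.1 + q * p.2) :=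
  (le_addRothNumber_product A B).trans_eq
    (isAddFreimanIso_finset_image_fst_add_mul_snd hA two_ne_zero hq).addRothNumber_congr

end TwoDigit

theorem r3_eq_addRothNumber (m : ℕ) : r3 m = addRothNumber (Finset.Icc 1 (m : ℤ)) := by
  refine IsGreatest.csSup_eq ⟨?_, ?_⟩
  · obtain ⟨A, hA, hcard, hfree⟩ := addRothNumber_spec (Finset.Icc 1 (m : ℤ))
    exact ⟨A, hA, hfree, hcard⟩
  · rintro _ ⟨A, hA, hfree, rfl⟩
    exact hfree.le_addRothNumber hA

theorem r3_mono : Monotone r3 := fun m n hmn ↦ by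
  rw [r3_eq_addRothNumber, r3_eq_addRothNumber]
  exact addRothNumber.mono (Finset.Icc_subset_Icc_right (by exact_mod_cast hmn))

-- `hq` says `2 * (m - 1) < q`, without truncated subtraction.
theorem r3_mul_r3_le {m q : ℕ} (n : ℕ) (hq : 2 * m < q + 2) : r3 m * r3 n ≤ r3 (m + q * n) := by
  simp only [r3_eq_addRothNumber]
  have hsub : (Finset.Icc 1 (m : ℤ) ×ˢ Finset.Icc 1 (n : ℤ)).image (fun p ↦ p.1 + (q : ℤ) * p.2) ⊆
      Finset.Icc 1 ((m + q * n : ℕ) : ℤ) :=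
    (image_fst_add_mul_snd_subset_Icc subset_rfl subset_rfl (by positivity)).trans
      (Finset.Icc_subset_Icc (by lia) (by lia))
  exact (addRothNumber_mul_le_image_fst_add_mul_snd subset_rfl (by lia)).trans
    (addRothNumber.mono hsub)

theorem stmt_17 (n : ℕ) (hn : 1 ≤ n) (A : Finset ℤ)
    (hA : A ⊆ Finset.Icc 1 (n : ℤ)) (hAP : ThreeAPFree (A : Set ℤ)) :
    ((A ×ˢ A).image (fun p => p.1 + 10 * (n : ℤ) * p.2) ⊆ Finset.Icc 1 (100 * (n : ℤ) ^ 2)) ∧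
    ThreeAPFree (((A ×ˢ A).image (fun p => p.1 + 10 * (n : ℤ) * p.2) : Finset ℤ) : Set ℤ) ∧
    ((A ×ˢ A).image (fun p => p.1 + 10 * (n : ℤ) * p.2)).card = A.card ^ 2 ∧
    r3 n ^ 2 ≤ r3 (100 * n ^ 2) := by
  have hle : n + 10 * n * n ≤ 100 * n ^ 2 := by nlinarith
  refine ⟨?_, threeAPFree_image_fst_add_mul_snd hA (by lia) hAP hAP, ?_, ?_⟩
  · exact (image_fst_add_mul_snd_subset_Icc hA hA (by positivity)).trans
      (Finset.Icc_subset_Icc (by lia) (by exact_mod_cast hle))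
  · rw [card_image_fst_add_mul_snd hA (by lia), sq]
  · rw [sq]
    exact (r3_mul_r3_le n (by lia)).trans (r3_mono hle)
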